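/- arXiv:1104.5007 — 2 statements merged into one kernel-verified Lean document; each statement's English description precedes it below -/
import Mathlib

section
/- For every integer t ≥ 1 there exists a constant C_t such that for every integer n ≥ 1 there exists an n×n (0,1)-matrix that avoids DS_{2t+3} and has at least 2^{(1/t!)·α(n)^t − C_t·α(n)^{t−1}} 1-entries in every column; in particular, ex_{DS_{2t+3}}(n) ≥ n·2^{(1/t!)·α(n)^t − C_t·α(n)^{t−1}}. -/
/-! ## Inverse Ackermann hierarchy -/

/-- Bounded-fuel iteration counter: number of applications of `f` needed to bring `m`
down to a value `≤ 1` (assuming `f` strictly decreases on values `≥ 2`). -/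
def iterCount (f : ℕ → ℕ) : ℕ → ℕ → ℕ
  | 0, _ => 0
  | fuel + 1, m => if m ≤ 1 then 0 else 1 + iterCount f fuel (f m)

/-- The inverse Ackermann hierarchy: `alphaHier 1 m = ⌈m/2⌉`, `alphaHier d 1 = 0` for `d ≥ 2`,
and `alphaHier d m = 1 + alphaHier d (alphaHier (d-1) m)` for `m, d ≥ 2`. -/
def alphaHier : ℕ → ℕ → ℕ
  | 0, m => m
  | 1, m => (m + 1) / 2
  | d + 2, m => iterCount (alphaHier (d + 1)) m m

/-- The inverse Ackermann function `α(m) = min {k ≥ 1 : α_k(m) ≤ 3}`. -/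
noncomputable def invAck (m : ℕ) : ℕ := sInf {k : ℕ | 1 ≤ k ∧ alphaHier k m ≤ 3}

/-! ## Permutations, restrictions, VC-dimension -/

/-- The restriction of the `n`-permutation `π` to the (increasing) `k`-tuple of positions `a`
is the `k`-permutation `σ`. -/
def PermRestrictionIs {n k : ℕ} (π : Equiv.Perm (Fin n)) (a : Fin k → Fin n)
    (σ : Equiv.Perm (Fin k)) : Prop :=
  ∀ i j : Fin k, σ i < σ j ↔ π (a i) < π (a j)

/-- The `k`-tuple of positions `a` is shattered by the family `P` of `n`-permutations. -/
def Shatters {n k : ℕ} (P : Finset (Equiv.Perm (Fin n))) (a : Fin k → Fin n) : Prop :=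
  StrictMono a ∧ ∀ σ : Equiv.Perm (Fin k), ∃ π ∈ P, PermRestrictionIs π a σ

/-- The family `P` of `n`-permutations has VC-dimension at most `k`:
no `(k+1)`-tuple of positions is shattered by `P`. -/
def VCDimLE (n k : ℕ) (P : Finset (Equiv.Perm (Fin n))) : Prop :=
  ∀ a : Fin (k + 1) → Fin n, ¬ Shatters P a

/-- The number of `1`-entries of the union of the permutation matrices of a family `P`
of `n`-permutations. -/
noncomputable def permOnes {n : ℕ} (P : Finset (Equiv.Perm (Fin n))) : ℕ :=
  Nat.card {p : Fin n × Fin n // ∃ π ∈ P, π p.2 = p.1}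

/-- `v(P) = |M_P| / n`, the average number of `1`-entries per column of the union
of the permutation matrices of the family `P`. -/
noncomputable def vPerm {n : ℕ} (P : Finset (Equiv.Perm (Fin n))) : ℝ :=
  (permOnes P : ℝ) / (n : ℝ)

/-! ## (0,1)-matrices -/

/-- The number of `1`-entries of a `(0,1)`-matrix (represented as a `Bool` matrix). -/
noncomputable def matOnes {m n : ℕ} (M : Fin m → Fin n → Bool) : ℕ :=
  Nat.card {p : Fin m × Fin n // M p.1 p.2 = true}

/-- The number of `1`-entries in column `j` of a `(0,1)`-matrix. -/
noncomputable def colOnes {m n : ℕ} (M : Fin m → Fin n → Bool) (j : Fin n) : ℕ :=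
  Nat.card {i : Fin m // M i j = true}

/-- The matrix `B` contains the matrix `S`. -/
def MatContains {m n p q : ℕ} (B : Fin m → Fin n → Bool) (S : Fin p → Fin q → Bool) : Prop :=
  ∃ (r : Fin p → Fin m) (c : Fin q → Fin n), StrictMono r ∧ StrictMono c ∧
    ∀ a b, S a b = true → B (r a) (c b) = true

/-- The `s × 2` matrix `DS_s`, with a `1`-entry in (1-indexed) row `i` and column `j`
exactly when `i + j` is odd. -/
def DS (s : ℕ) : Fin s → Fin 2 → Bool :=
  fun i j => decide ((i.val + j.val) % 2 = 1)

/-- The maximum number of `1`-entries in an `n × n` matrix avoiding `S`. -/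
noncomputable def exMat {p q : ℕ} (S : Fin p → Fin q → Bool) (n : ℕ) : ℕ :=
  sSup {x : ℕ | ∃ M : Fin n → Fin n → Bool, ¬ MatContains M S ∧ matOnes M = x}

/-- An `n × n` matrix is `k`-full if some increasing `k`-tuple of columns contains
every `k`-permutation matrix. -/
def IsFull (k : ℕ) {n : ℕ} (M : Fin n → Fin n → Bool) : Prop :=
  ∃ c : Fin k → Fin n, StrictMono c ∧ ∀ σ : Equiv.Perm (Fin k),
    ∃ r : Fin k → Fin n, StrictMono r ∧ ∀ b : Fin k, M (r (σ b)) (c b) = true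

/-- `pFull k n` is the maximum number of `1`-entries in an `n × n` matrix that is
not `(k+1)`-full. -/
noncomputable def pFull (k n : ℕ) : ℕ :=
  sSup {x : ℕ | ∃ M : Fin n → Fin n → Bool, ¬ IsFull (k + 1) M ∧ matOnes M = x}

/-! ## Formations -/

/-- `M` contains a `B`-fat `(r,s)`-formation: there are an `s`-partition of the rows into
intervals (the fibers of a monotone map `g`) and `r` columns, each having at least `B`
`1`-entries in every interval. -/
def FatFormation (B r s : ℕ) {m n : ℕ} (M : Fin m → Fin n → Bool) : Prop :=
  ∃ g : Fin m → Fin s, Monotone g ∧ ∃ c : Fin r → Fin n, StrictMono c ∧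
    ∀ (j : Fin r) (i : Fin s), B ≤ Nat.card {x : Fin m // g x = i ∧ M x (c j) = true}

/-- `M` contains a doubled `(r,s)`-formation: there are an `s`-partition of the rows into
intervals and `r` columns, each having at least one `1`-entry in the first and last
interval and at least two `1`-entries in every other interval. -/
def DoubledFormation (r s : ℕ) {m n : ℕ} (M : Fin m → Fin n → Bool) : Prop :=
  ∃ g : Fin m → Fin s, Monotone g ∧ ∃ c : Fin r → Fin n, StrictMono c ∧
    ∀ (j : Fin r) (i : Fin s),
      1 ≤ Nat.card {x : Fin m // g x = i ∧ M x (c j) = true} ∧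
      (i.val ≠ 0 → i.val ≠ s - 1 → 2 ≤ Nat.card {x : Fin m // g x = i ∧ M x (c j) = true})

/-! ## The functions R, D, β -/

/-- Nivasch's hierarchy `R_s(d)` (shifted as in the paper). -/
def Rfun : ℕ → ℕ → ℕ
  | 0, _ => 0
  | 1, _ => 0
  | 2, _ => 2
  | 3, _ => 3
  | 4, d => 2 * d + 1
  | _ + 5, 0 => 0
  | _ + 5, 1 => 0
  | s + 5, 2 => 2 ^ (s + 3) + 1
  | s + 5, d + 3 =>
      2 * (Rfun (s + 4) (d + 3) - 1) + (Rfun (s + 3) (d + 3) - 1) * (Rfun (s + 5) (d + 2) - 3) + 1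
  termination_by s d => (s, d)

/-- The hierarchy `D_s(d)`. -/
def Dfun : ℕ → ℕ → ℕ
  | 0, _ => 0
  | 1, _ => 0
  | 2, _ => 2
  | _ + 3, 0 => 0
  | _ + 3, 1 => 0
  | s + 3, 2 => 2 ^ (s + 2) + 2 ^ (s + 1) - 1
  | s + 3, d + 3 =>
      2 * Dfun (s + 2) (d + 3) + (Dfun (s + 1) (d + 3) + 1) * (Rfun (s + 3) (d + 2) - 3)
        + Dfun (s + 3) (d + 2) - Rfun (s + 3) (d + 2) + 1
  termination_by s d => (s, d)

/-- `β_s(m) = D_s(α(m))`. -/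
noncomputable def betaFun (s m : ℕ) : ℕ := Dfun s (invAck m)

/-! ## Sequences: MST and formations in sequences -/

/-- The list of column indices of the `1`-entries of a row, in increasing order. -/
def rowList {n : ℕ} (row : Fin n → Bool) : List (Fin n) :=
  (List.finRange n).filter (fun j => row j)

/-- The matrix → sequence transformation: read the rows top to bottom, writing for each
`1`-entry the index of its column. -/
def MST {m n : ℕ} (M : Fin m → Fin n → Bool) : List (Fin n) :=
  ((List.finRange m).map (fun i => rowList (M i))).flatten

/-- The list `L` contains an `(r,s)`-formation as a subsequence: a concatenation of `s`
permutations of the same `r`-element set of symbols is a sublist of `L`. -/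
def IsFormationSeq {A : Type*} [DecidableEq A] (r s : ℕ) (L : List A) : Prop :=
  ∃ (T : Finset A) (F : List (List A)), T.card = r ∧ F.length = s ∧
    (∀ l ∈ F, l.Nodup ∧ l.toFinset = T) ∧ List.Sublist F.flatten L

/-! ## Alternations and good arrays -/

/-- There is an increasing chain of length `q` alternating `Q, P, Q, P, …`. -/
def HasAlt {T : Type} [LT T] (P Q : T → Prop) (q : ℕ) : Prop :=
  ∃ f : ℕ → T, (∀ i, i + 1 < q → f i < f (i + 1)) ∧ (∀ i < q, i % 2 = 0 → Q (f i)) ∧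
    (∀ i < q, i % 2 = 1 → P (f i))

/-- The admissible interaction patterns of two columns (left `P`, right `Q`). -/
def PairOK {R : Type} [LT R] (t : ℕ) (P Q : R → Prop) : Prop :=
  ((∀ r, P r → Q r → False) ∧ ¬ HasAlt P Q (2 * t + 3)) ∨
  ∃ ρ, P ρ ∧ Q ρ ∧ (∀ r, P r → Q r → r = ρ) ∧
    (∀ r r', Q r → P r' → r < r' → r' < ρ → False) ∧
    (∀ r r', P r → Q r' → ρ < r → r < r' → False)

/-- Symbol `c` occurs in row `r`. -/
def Occ {R C : Type} {m : ℕ} (X : R → Fin m → C) (c : C) (r : R) : Prop := ∃ j, X r j = c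

/-- Good arrays: rows list symbols increasingly, every symbol occurs exactly `μ` times,
and every two symbols interact admissibly. -/
def GoodA {R C : Type} [LinearOrder R] [LinearOrder C] (t μ m : ℕ) (X : R → Fin m → C) : Prop :=
  (∀ r, StrictMono (X r)) ∧ (∀ c, Nat.card {p : R × Fin m // X p.1 p.2 = c} = μ) ∧
  ∀ a b, a < b → PairOK t (Occ X a) (Occ X b)

/-- Good arrays, read as sequences. -/
def GoodD {R C : Type} [LinearOrder R] [LinearOrder C] (t μ m : ℕ) (X : R → Fin m → C) : Prop :=
  (∀ r, Function.Injective (X r)) ∧ (∀ c, Nat.card {p : R × Fin m // X p.1 p.2 = c} = μ) ∧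
  ∀ a b, a < b → ¬ HasAlt (T := R ×ₗ Fin m) (fun p => X (ofLex p).1 (ofLex p).2 = a)
    (fun p => X (ofLex p).1 (ofLex p).2 = b) (2 * t + 3)

lemma chain_mono {T : Type} [Preorder T] {f : ℕ → T} {q : ℕ}
    (h : ∀ i, i + 1 < q → f i < f (i + 1)) {i j : ℕ} (hij : i ≤ j) (hj : j < q) : f i ≤ f j := by
  induction j, hij using Nat.le_induction with
  | base => exact le_rfl
  | succ j hij ih => exact (ih (by omega)).trans (h j hj).le

lemma chain_strict {T : Type} [Preorder T] {f : ℕ → T} {q : ℕ}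
    (h : ∀ i, i + 1 < q → f i < f (i + 1)) {i j : ℕ} (hij : i < j) (hj : j < q) : f i < f j :=
  lt_of_lt_of_le (h i (by omega)) (chain_mono h (i := i + 1) hij hj)

/-- Transport of an alternation along a weakly monotone projection when the
projected predicates are disjoint. -/
lemma HasAlt.proj {T R : Type} [Preorder T] [PartialOrder R] {P Q : T → Prop} {P' Q' : R → Prop}
    {q : ℕ} (π : T → R) (hπ : ∀ x y, x < y → π x ≤ π y) (hP : ∀ x, P x → P' (π x))
    (hQ : ∀ x, Q x → Q' (π x)) (hd : ∀ r, P' r → Q' r → False) (h : HasAlt P Q q) :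
    HasAlt P' Q' q := by
  obtain ⟨f, h1, h2, h3⟩ := h
  refine ⟨fun i => π (f i), fun i hi => ?_, fun i hi he => hQ _ (h2 i hi he),
    fun i hi he => hP _ (h3 i hi he)⟩
  refine lt_of_le_of_ne (hπ _ _ (h1 i hi)) fun heq => ?_
  dsimp only at heq
  rcases Nat.mod_two_eq_zero_or_one i with he | he
  · have a := hQ _ (h2 i (by omega) he)
    have b := hP _ (h3 (i + 1) hi (by omega))
    rw [← heq] at b
    exact hd _ b a
  · have a := hP _ (h3 i (by omega) he)
    have b := hQ _ (h2 (i + 1) hi (by omega))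
    rw [← heq] at b
    exact hd _ a b

/-- In the sharing case, all inner elements of a chain project to the shared row. -/
lemma shared_inner {T R : Type} [Preorder T] [LinearOrder R] {P Q : T → Prop} {P' Q' : R → Prop}
    {t : ℕ} (π : T → R) (hπ : ∀ x y, x < y → π x ≤ π y) (hP : ∀ x, P x → P' (π x))
    (hQ : ∀ x, Q x → Q' (π x)) {ρ : R} (hu : ∀ r, P' r → Q' r → r = ρ)
    (hb : ∀ r r', Q' r → P' r' → r < r' → r' < ρ → False)
    (ha : ∀ r r', P' r → Q' r' → ρ < r → r < r' → False)
    {f : ℕ → T} (h1 : ∀ i, i + 1 < 2 * t + 3 → f i < f (i + 1))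
    (h2 : ∀ i < 2 * t + 3, i % 2 = 0 → Q (f i)) (h3 : ∀ i < 2 * t + 3, i % 2 = 1 → P (f i))
    {i : ℕ} (hi : 1 ≤ i) (hi' : i ≤ 2 * t + 1) : π (f i) = ρ := by
  have hm : ∀ i j, i ≤ j → j < 2 * t + 3 → π (f i) ≤ π (f j) := by
    intro i j hij hj
    rcases hij.eq_or_lt with rfl | hlt
    · exact le_rfl
    · exact hπ _ _ (chain_strict h1 hlt hj)
  have hlow : ρ ≤ π (f 1) := by
    by_contra hlt
    push Not at hlt
    have q0 := hQ _ (h2 0 (by omega) rfl)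
    have p1 := hP _ (h3 1 (by omega) rfl)
    rcases (hm 0 1 (by omega) (by omega)).eq_or_lt with he | hl
    · rw [he] at q0
      exact hlt.ne (hu _ p1 q0)
    · exact hb _ _ q0 p1 hl hlt
  have hhigh : π (f (2 * t + 1)) ≤ ρ := by
    by_contra hlt
    push Not at hlt
    have q0 := hQ _ (h2 (2 * t + 2) (by omega) (by omega))
    have p1 := hP _ (h3 (2 * t + 1) (by omega) (by omega))
    rcases (hm (2 * t + 1) (2 * t + 2) (by omega) (by omega)).eq_or_lt with he | hl
    · rw [← he] at q0
      exact hlt.ne' (hu _ p1 q0)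
    · exact ha _ _ p1 q0 hlt hl
  exact le_antisymm ((hm i _ hi' (by omega)).trans hhigh) (hlow.trans (hm 1 i hi (by omega)))

lemma lex_fst_le {A B : Type} [LinearOrder A] [LinearOrder B] (x y : A ×ₗ B) (h : x < y) :
    (ofLex x).1 ≤ (ofLex y).1 := by
  rcases Prod.Lex.lt_iff.1 h with h | h
  · exact h.le
  · exact h.1.le

lemma lex_snd_lt {A B : Type} [LinearOrder A] [LinearOrder B] (x y : A ×ₗ B) (h : x < y)
    (he : (ofLex x).1 = (ofLex y).1) : (ofLex x).2 < (ofLex y).2 := by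
  rcases Prod.Lex.lt_iff.1 h with h | h
  · exact absurd he h.ne
  · exact h.2

lemma GoodA.goodD {R C : Type} [LinearOrder R] [LinearOrder C] {t μ m : ℕ} {X : R → Fin m → C}
    (h : GoodA (t + 1) μ m X) : GoodD (t + 1) μ m X := by
  obtain ⟨hs, hc, hp⟩ := h
  refine ⟨fun r => (hs r).injective, hc, fun a b hab halt => ?_⟩
  rcases hp a b hab with ⟨hd, hno⟩ | ⟨ρ, -, -, hu, hb, ha⟩
  · refine hno (halt.proj (fun p : R ×ₗ Fin m => (ofLex p).1) lex_fst_le (fun x hx => ⟨_, hx⟩)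
      (fun x hx => ⟨_, hx⟩) hd)
  · obtain ⟨f, h1, h2, h3⟩ := halt
    have key := fun i hi hi' => shared_inner (P' := Occ X a) (Q' := Occ X b)
      (fun p : R ×ₗ Fin m => (ofLex p).1) lex_fst_le (fun x hx => ⟨_, hx⟩)
      (fun x hx => ⟨_, hx⟩) hu hb ha h1 h2 h3 (i := i) hi hi'
    have k1 := key 1 (by omega) (by omega)
    have k3 := key 3 (by omega) (by omega)
    have p1 := h3 1 (by omega) rfl
    have p3 := h3 3 (by omega) rfl
    have hlt := lex_snd_lt _ _ (chain_strict h1 (i := 1) (j := 3) (by omega) (by omega))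
      (k1.trans k3.symm)
    dsimp only at p1 p3 k1 k3
    rw [k1] at p1
    rw [k3] at p3
    exact hlt.ne ((hs ρ).injective (p1.trans p3.symm))

lemma GoodD.noAlt {R C : Type} [LinearOrder R] [LinearOrder C] {t μ m : ℕ} {X : R → Fin m → C}
    (h : GoodD t μ m X) {a b : C} (hab : a < b) : ¬ HasAlt (Occ X a) (Occ X b) (2 * t + 3) := by
  rintro ⟨f, h1, h2, h3⟩
  have hex : ∀ i, ∃ j : Fin m, i < 2 * t + 3 → ((i % 2 = 0 → X (f i) j = b) ∧
      (i % 2 = 1 → X (f i) j = a)) := by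
    intro i
    by_cases hi : i < 2 * t + 3
    · rcases Nat.mod_two_eq_zero_or_one i with he | he
      · obtain ⟨j, hj⟩ := h2 i hi he
        exact ⟨j, fun _ => ⟨fun _ => hj, fun h => by omega⟩⟩
      · obtain ⟨j, hj⟩ := h3 i hi he
        exact ⟨j, fun _ => ⟨fun h => by omega, fun _ => hj⟩⟩
    · obtain ⟨j, hj⟩ := h2 0 (by omega) rfl
      exact ⟨j, fun h => absurd h hi⟩
  choose g hg using hex
  refine h.2.2 a b hab ⟨fun i => toLex (f i, g i), fun i hi => ?_, fun i hi he => (hg i hi).1 he,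
    fun i hi he => (hg i hi).2 he⟩
  exact Prod.Lex.lt_iff.2 (Or.inl (h1 i hi))

/-! ## Transport -/

lemma PairOK.transport {R R' : Type} [LinearOrder R] [LinearOrder R'] (φ : R ≃o R') {t : ℕ}
    {P Q : R → Prop} (h : PairOK t P Q) :
    PairOK t (fun r => P (φ.symm r)) (fun r => Q (φ.symm r)) := by
  rcases h with ⟨hd, hno⟩ | ⟨ρ, h1, h2, hu, hb, ha⟩
  · refine Or.inl ⟨fun r => hd _, fun hh => hno ?_⟩
    exact hh.proj (fun r => φ.symm r) (fun x y hxy => φ.symm.monotone hxy.le) (fun _ h => h)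
      (fun _ h => h) hd
  · refine Or.inr ⟨φ ρ, by simpa using h1, by simpa using h2, fun r p q => ?_,
      fun r r' q p l l' => ?_, fun r r' p q l l' => ?_⟩
    · rw [← hu _ p q]; simp
    · exact hb _ _ q p (φ.symm.strictMono l) (by simpa using φ.symm.strictMono l')
    · exact ha _ _ p q (by simpa using φ.symm.strictMono l) (φ.symm.strictMono l')

lemma GoodA.transport {R R' C C' : Type} [LinearOrder R] [LinearOrder R'] [LinearOrder C]
    [LinearOrder C'] (φ : R ≃o R') (ψ : C ≃o C') {t μ m : ℕ} {X : R → Fin m → C}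
    (h : GoodA t μ m X) : GoodA t μ m (fun r j => ψ (X (φ.symm r) j)) := by
  obtain ⟨hs, hc, hp⟩ := h
  refine ⟨fun r => ψ.strictMono.comp (hs _), fun c => ?_, fun a b hab => ?_⟩
  · rw [← hc (ψ.symm c)]
    refine Nat.card_congr (Equiv.subtypeEquiv (φ.symm.toEquiv.prodCongr (Equiv.refl _)) ?_)
    intro p
    simp [OrderIso.eq_symm_apply]
  · have := (hp _ _ (ψ.symm.strictMono hab)).transport φ
    have e : ∀ c, Occ (fun r j => ψ (X (φ.symm r) j)) c =
        fun r => Occ X (ψ.symm c) (φ.symm r) := by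
      intro c; funext r; simp [Occ, OrderIso.eq_symm_apply]
    rw [e, e]; exact this

/-! ## The recursive step -/

section step
variable {FA FD FS NA ND NS m : ℕ}

/-- The new array: rows are triples, left columns are the symbols of the outer array,
right columns are copies of the symbols of the inner array. -/
def stepX (XA : Fin FA → Fin ND → Fin NA) (XD : Fin FD → Fin FS → Fin ND)
    (XS : Fin FS → Fin m → Fin NS) :
    ((Fin FA ×ₗ Fin FD) ×ₗ Fin FS) → Fin (m + 1) →
      (Fin NA ⊕ₗ ((Fin FA ×ₗ Fin FD) ×ₗ Fin NS)) :=
  fun r => Fin.cons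
    (Sum.inlₗ (XA (ofLex (ofLex r).1).1 (Fin.rev (XD (ofLex (ofLex r).1).2 (ofLex r).2))))
    (fun j => Sum.inrₗ (toLex ((ofLex r).1, XS (ofLex r).2 j)))

variable {XA : Fin FA → Fin ND → Fin NA} {XD : Fin FD → Fin FS → Fin ND}
    {XS : Fin FS → Fin m → Fin NS}

lemma occ_inl (a : Fin NA) (r : (Fin FA ×ₗ Fin FD) ×ₗ Fin FS) :
    Occ (stepX XA XD XS) (Sum.inlₗ a) r ↔
      XA (ofLex (ofLex r).1).1 (Fin.rev (XD (ofLex (ofLex r).1).2 (ofLex r).2)) = a := by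
  constructor
  · rintro ⟨j, hj⟩
    revert hj
    refine Fin.cases ?_ (fun j => ?_) j
    · intro hj
      exact Sum.inl_injective (toLex.injective hj)
    · intro hj
      simp only [stepX, Fin.cons_succ] at hj
      exact absurd (toLex.injective hj) (by simp)
  · intro h
    exact ⟨0, by simp [stepX, h]⟩

lemma occ_inr (u : Fin FA ×ₗ Fin FD) (c : Fin NS) (r : (Fin FA ×ₗ Fin FD) ×ₗ Fin FS) :
    Occ (stepX XA XD XS) (Sum.inrₗ (toLex (u, c))) r ↔ (ofLex r).1 = u ∧ Occ XS c (ofLex r).2 := by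
  constructor
  · rintro ⟨j, hj⟩
    revert hj
    refine Fin.cases ?_ (fun j => ?_) j
    · intro hj
      simp only [stepX, Fin.cons_zero] at hj
      exact absurd (toLex.injective hj) (by simp)
    · intro hj
      simp only [stepX, Fin.cons_succ] at hj
      have := toLex.injective (Sum.inr_injective (toLex.injective hj))
      rw [Prod.mk.injEq] at this
      exact ⟨this.1, j, this.2⟩
  · rintro ⟨h, j, hj⟩
    exact ⟨j.succ, by simp [stepX, h, hj]⟩

lemma pair_ll {t μA μD : ℕ} (hA : GoodA (t + 1) μA ND XA) (hD : GoodD t μD FS XD)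
    {a b : Fin NA} (hab : a < b) :
    PairOK (t + 1) (Occ (stepX XA XD XS) (Sum.inlₗ a)) (Occ (stepX XA XD XS) (Sum.inlₗ b)) := by
  have eA : ∀ a, Occ (stepX XA XD XS) (Sum.inlₗ a) = fun r =>
      XA (ofLex (ofLex r).1).1 (Fin.rev (XD (ofLex (ofLex r).1).2 (ofLex r).2)) = a :=
    fun a => funext fun r => propext (occ_inl a r)
  rw [eA, eA]
  refine Or.inl ⟨fun r h h' => hab.ne (h.symm.trans h'), fun halt => ?_⟩
  have hπ : ∀ x y : (Fin FA ×ₗ Fin FD) ×ₗ Fin FS, x < y →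
      (ofLex (ofLex x).1).1 ≤ (ofLex (ofLex y).1).1 := by
    intro x y hxy
    rcases (lex_fst_le x y hxy).eq_or_lt with h | h
    · rw [h]
    · exact lex_fst_le _ _ h
  rcases hA.2.2 a b hab with ⟨hd, hno⟩ | ⟨ρ, ⟨ja, hja⟩, ⟨jb, hjb⟩, hu, hb, ha⟩
  · exact hno (halt.proj (fun r : (Fin FA ×ₗ Fin FD) ×ₗ Fin FS => (ofLex (ofLex r).1).1) hπ (fun x hx => ⟨_, hx⟩)
      (fun x hx => ⟨_, hx⟩) hd)
  · obtain ⟨f, h1, h2, h3⟩ := halt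
    have key := fun i hi hi' => shared_inner
      (P := fun r : (Fin FA ×ₗ Fin FD) ×ₗ Fin FS =>
        XA (ofLex (ofLex r).1).1 (Fin.rev (XD (ofLex (ofLex r).1).2 (ofLex r).2)) = a)
      (Q := fun r : (Fin FA ×ₗ Fin FD) ×ₗ Fin FS =>
        XA (ofLex (ofLex r).1).1 (Fin.rev (XD (ofLex (ofLex r).1).2 (ofLex r).2)) = b)
      (P' := Occ XA a) (Q' := Occ XA b)
      (fun r : (Fin FA ×ₗ Fin FD) ×ₗ Fin FS => (ofLex (ofLex r).1).1) hπ (fun x hx => ⟨_, hx⟩)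
      (fun x hx => ⟨_, hx⟩) hu hb ha h1 h2 h3 (i := i) hi hi'
    have hinj := (hA.1 ρ).injective
    have hjab : ja < jb := by
      rw [← (hA.1 ρ).lt_iff_lt, hja, hjb]; exact hab
    refine hD.2.2 (Fin.rev jb) (Fin.rev ja) (by simpa using hjab)
      ⟨fun i => toLex ((ofLex (ofLex (f (i + 1))).1).2, (ofLex (f (i + 1))).2), fun i hi => ?_,
        fun i hi he => ?_, fun i hi he => ?_⟩
    · have e1 := key (i + 1) (by omega) (by omega)
      have e2 := key (i + 1 + 1) (by omega) (by omega)
      have hl := h1 (i + 1) (by omega)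
      rw [Prod.Lex.lt_iff]
      rcases Prod.Lex.lt_iff.1 hl with h | ⟨h, h'⟩
      · exact Or.inl (lex_snd_lt _ _ h (e1.trans e2.symm))
      · exact Or.inr ⟨by simp [h], h'⟩
    · have e1 := key (i + 1) (by omega) (by omega)
      have p := h3 (i + 1) (by omega) (by omega)
      dsimp only at e1 p
      rw [e1, ← hja] at p
      rw [← hinj p]; simp
    · have e1 := key (i + 1) (by omega) (by omega)
      have p := h2 (i + 1) (by omega) (by omega)
      dsimp only at e1 p
      rw [e1, ← hjb] at p
      rw [← hinj p]; simp

lemma between_copy {A B : Type} [LinearOrder A] [LinearOrder B] {x y z : A ×ₗ B} {u : A}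
    (hxy : x < y) (hyz : y < z) (hx : (ofLex x).1 = u) (hz : (ofLex z).1 = u) :
    (ofLex y).1 = u :=
  le_antisymm ((lex_fst_le _ _ hyz).trans hz.le) (hx.ge.trans (lex_fst_le _ _ hxy))

lemma pair_lr {t μA μD : ℕ} (hA : GoodA (t + 1) μA ND XA) (hD : GoodD t μD FS XD)
    (a : Fin NA) (u : Fin FA ×ₗ Fin FD) (c : Fin NS) :
    PairOK (t + 1) (Occ (stepX XA XD XS) (Sum.inlₗ a))
      (Occ (stepX XA XD XS) (Sum.inrₗ (toLex (u, c)))) := by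
  have huniq : ∀ r r' : (Fin FA ×ₗ Fin FD) ×ₗ Fin FS, Occ (stepX XA XD XS) (Sum.inlₗ a) r →
      Occ (stepX XA XD XS) (Sum.inlₗ a) r' → (ofLex r).1 = u → (ofLex r').1 = u → r = r' := by
    intro r r' h h' hr hr'
    rw [occ_inl] at h h'
    rw [hr] at h
    rw [hr'] at h'
    have := hD.1 _ (Fin.rev_injective ((hA.1 _).injective (h.trans h'.symm)))
    exact ofLex.injective (Prod.ext (hr.trans hr'.symm) this)
  by_cases hsh : ∃ ρ, Occ (stepX XA XD XS) (Sum.inlₗ a) ρ ∧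
      Occ (stepX XA XD XS) (Sum.inrₗ (toLex (u, c))) ρ
  · obtain ⟨ρ, h1, h2⟩ := hsh
    have hρ := ((occ_inr _ _ _).1 h2).1
    refine Or.inr ⟨ρ, h1, h2, fun r p q => ?_, fun r r' q p l l' => ?_, fun r r' p q l l' => ?_⟩
    · exact huniq _ _ p h1 ((occ_inr _ _ _).1 q).1 hρ
    · exact l'.ne (huniq _ _ p h1 (between_copy l l' ((occ_inr _ _ _).1 q).1 hρ) hρ)
    · exact l.ne' (huniq _ _ p h1 (between_copy l l' hρ ((occ_inr _ _ _).1 q).1) hρ)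
  · refine Or.inl ⟨fun r p q => hsh ⟨r, p, q⟩, ?_⟩
    rintro ⟨f, h1, h2, h3⟩
    have q0 := ((occ_inr _ _ _).1 (h2 0 (by omega) rfl)).1
    have q4 := ((occ_inr _ _ _).1 (h2 4 (by omega) rfl)).1
    have p1 := h3 1 (by omega) rfl
    have p3 := h3 3 (by omega) rfl
    have st := fun i j hij hj => chain_strict h1 (i := i) (j := j) hij hj
    exact (st 1 3 (by omega) (by omega)).ne (huniq _ _ p1 p3
      (between_copy (st 0 1 (by omega) (by omega)) (st 1 4 (by omega) (by omega)) q0 q4)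
      (between_copy (st 0 3 (by omega) (by omega)) (st 3 4 (by omega) (by omega)) q0 q4))

lemma pair_rr {t μ : ℕ} (hS : GoodA (t + 1) μ m XS)
    {u v : Fin FA ×ₗ Fin FD} {a b : Fin NS} (hab : toLex (u, a) < toLex (v, b)) :
    PairOK (t + 1) (Occ (stepX XA XD XS) (Sum.inrₗ (toLex (u, a))))
      (Occ (stepX XA XD XS) (Sum.inrₗ (toLex (v, b)))) := by
  have eA : ∀ u a, Occ (stepX XA XD XS) (Sum.inrₗ (toLex (u, a))) = fun r =>
      (ofLex r).1 = u ∧ Occ XS a (ofLex r).2 :=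
    fun u a => funext fun r => propext (occ_inr u a r)
  rw [eA, eA]
  rcases Prod.Lex.lt_iff.1 hab with h | ⟨h, h'⟩
  · change u < v at h
    refine Or.inl ⟨fun r p q => h.ne (p.1.symm.trans q.1), ?_⟩
    rintro ⟨f, h1, h2, h3⟩
    have q0 := (h2 0 (by omega) rfl).1
    have p1 := (h3 1 (by omega) rfl).1
    have := lex_fst_le _ _ (h1 0 (by omega))
    rw [q0] at this
    rw [show 0 + 1 = 1 from rfl, p1] at this
    exact absurd h (not_lt.2 this)
  · change u = v at h
    change a < b at h'
    subst h
    rcases hS.2.2 a b h' with ⟨hd, hno⟩ | ⟨ρ, h1, h2, hu, hb, ha⟩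
    · refine Or.inl ⟨fun r p q => hd _ p.2 q.2, ?_⟩
      rintro ⟨f, h1, h2, h3⟩
      refine hno ⟨fun i => (ofLex (f i)).2, fun i hi => ?_, fun i hi he => (h2 i hi he).2,
        fun i hi he => (h3 i hi he).2⟩
      refine lex_snd_lt _ _ (h1 i hi) ?_
      have : ∀ i < 2 * (t + 1) + 3, (ofLex (f i)).1 = u := by
        intro i hi
        rcases Nat.mod_two_eq_zero_or_one i with he | he
        · exact (h2 i hi he).1
        · exact (h3 i hi he).1
      rw [this i (by omega), this (i + 1) hi]
    · refine Or.inr ⟨toLex (u, ρ), ⟨rfl, h1⟩, ⟨rfl, h2⟩, fun r p q => ?_,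
        fun r r' q p l l' => ?_, fun r r' p q l l' => ?_⟩
      · exact ofLex.injective (Prod.ext p.1 (hu _ p.2 q.2))
      · exact hb _ _ q.2 p.2 (lex_snd_lt _ _ l (q.1.trans p.1.symm)) (lex_snd_lt _ _ l' p.1)
      · exact ha _ _ p.2 q.2 (lex_snd_lt _ _ l p.1.symm) (lex_snd_lt _ _ l' (p.1.trans q.1.symm))

lemma stepX_strictMono (hS : ∀ r, StrictMono (XS r)) (r) : StrictMono (stepX XA XD XS r) := by
  intro i j hij
  revert hij
  refine Fin.cases ?_ (fun i => ?_) i <;> refine Fin.cases ?_ (fun j => ?_) j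
  · intro h; exact absurd h (lt_irrefl _)
  · intro _
    simp only [stepX, Fin.cons_zero, Fin.cons_succ]
    exact Sum.Lex.inl_lt_inr _ _
  · intro h; exact absurd h (by simp)
  · intro h
    simp only [stepX, Fin.cons_succ]
    refine Sum.Lex.inr_lt_inr_iff.2 (Prod.Lex.lt_iff.2 (Or.inr ⟨rfl, hS _ ?_⟩))
    simpa using h

lemma count_inl {μA μD : ℕ}
    (hA : ∀ c, Nat.card {p : Fin FA × Fin ND // XA p.1 p.2 = c} = μA)
    (hD : ∀ c, Nat.card {p : Fin FD × Fin FS // XD p.1 p.2 = c} = μD) (a : Fin NA) :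
    Nat.card {p : ((Fin FA ×ₗ Fin FD) ×ₗ Fin FS) × Fin (m + 1) //
      stepX XA XD XS p.1 p.2 = Sum.inlₗ a} = μA * μD := by
  have e : {p : ((Fin FA ×ₗ Fin FD) ×ₗ Fin FS) × Fin (m + 1) //
      stepX XA XD XS p.1 p.2 = Sum.inlₗ a} ≃
      Σ p : {p : Fin FA × Fin ND // XA p.1 p.2 = a},
        {q : Fin FD × Fin FS // XD q.1 q.2 = Fin.rev p.1.2} := {
    toFun := fun p => ⟨⟨((ofLex (ofLex p.1.1).1).1,
        Fin.rev (XD (ofLex (ofLex p.1.1).1).2 (ofLex p.1.1).2)), (occ_inl _ _).1 ⟨_, p.2⟩⟩,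
        ⟨((ofLex (ofLex p.1.1).1).2, (ofLex p.1.1).2), by simp⟩⟩
    invFun := fun x => ⟨(toLex (toLex (x.1.1.1, x.2.1.1), x.2.1.2), 0), by
      have h1 := x.1.2
      have h2 := x.2.2
      simp only [stepX, Fin.cons_zero, ofLex_toLex]
      rw [h2, Fin.rev_rev, h1]⟩
    left_inv := by
      rintro ⟨⟨r, j⟩, hj⟩
      refine Subtype.ext (Prod.ext rfl ?_)
      revert hj
      refine Fin.cases (fun _ => rfl) (fun j hj => ?_) j
      simp only [stepX, Fin.cons_succ] at hj
      exact absurd (toLex.injective hj) (by simp)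
    right_inv := by
      rintro ⟨⟨⟨rA, c⟩, h1⟩, ⟨⟨rD, s⟩, h2⟩⟩
      dsimp only at h1 h2
      have : c = Fin.rev (XD rD s) := by rw [h2, Fin.rev_rev]
      subst this
      rfl }
  rw [Nat.card_congr e, Nat.card_sigma]
  simp only [hD, Finset.sum_const, Finset.card_univ, smul_eq_mul]
  rw [← Nat.card_eq_fintype_card, hA]

lemma count_inr {μ : ℕ}
    (hS : ∀ c, Nat.card {p : Fin FS × Fin m // XS p.1 p.2 = c} = μ)
    (u : Fin FA ×ₗ Fin FD) (c : Fin NS) :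
    Nat.card {p : ((Fin FA ×ₗ Fin FD) ×ₗ Fin FS) × Fin (m + 1) //
      stepX XA XD XS p.1 p.2 = Sum.inrₗ (toLex (u, c))} = μ := by
  rw [← hS c]
  symm
  refine Nat.card_congr (Equiv.ofBijective
    (fun p => ⟨(toLex (u, p.1.1), p.1.2.succ), by
      simp only [stepX, Fin.cons_succ, ofLex_toLex, p.2]⟩) ⟨?_, ?_⟩)
  · rintro ⟨⟨s, j⟩, h⟩ ⟨⟨s', j'⟩, h'⟩ he
    simp only [Subtype.mk.injEq, Prod.mk.injEq, toLex_inj, true_and, Fin.succ_inj] at he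
    simp [he.1, he.2]
  · rintro ⟨⟨r, j⟩, hj⟩
    revert hj
    refine Fin.cases (fun hj => ?_) (fun j hj => ?_) j
    · simp only [stepX, Fin.cons_zero] at hj
      exact absurd (toLex.injective hj) (by simp)
    · have hj' := hj
      simp only [stepX, Fin.cons_succ] at hj'
      have := toLex.injective (Sum.inr_injective (toLex.injective hj'))
      rw [Prod.mk.injEq] at this
      refine ⟨⟨((ofLex r).2, j), this.2⟩, Subtype.ext (Prod.ext ?_ rfl)⟩
      exact ofLex.injective (Prod.ext this.1.symm rfl)

lemma step_good {t μA μD : ℕ} (hA : GoodA (t + 1) μA ND XA) (hD : GoodD t μD FS XD)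
    (hS : GoodA (t + 1) (μA * μD) m XS) :
    GoodA (t + 1) (μA * μD) (m + 1) (stepX XA XD XS) := by
  refine ⟨stepX_strictMono hS.1, fun c => ?_, fun a b hab => ?_⟩
  · obtain ⟨c, rfl⟩ := toLex.surjective c
    rcases c with a | c
    · exact count_inl hA.2.1 hD.2.1 a
    · exact count_inr hS.2.1 (ofLex c).1 (ofLex c).2
  · obtain ⟨a, rfl⟩ := toLex.surjective a
    obtain ⟨b, rfl⟩ := toLex.surjective b
    rcases a with a | a <;> rcases b with b | b
    · exact pair_ll hA hD (Sum.Lex.inl_lt_inl_iff.1 hab)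
    · exact pair_lr hA hD a (ofLex b).1 (ofLex b).2
    · exact absurd hab Sum.Lex.not_inr_lt_inl
    · exact pair_rr hS (u := (ofLex a).1) (v := (ofLex b).1) (a := (ofLex a).2) (b := (ofLex b).2)
        (Sum.Lex.inr_lt_inr_iff.1 hab)

lemma step_fin {t μA μD : ℕ} (hA : GoodA (t + 1) μA ND XA) (hD : GoodD t μD FS XD)
    (hS : GoodA (t + 1) (μA * μD) m XS) :
    ∃ X : Fin (FA * FD * FS) → Fin (m + 1) → Fin (NA + FA * FD * NS),
      GoodA (t + 1) (μA * μD) (m + 1) X := by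
  have e1 : Fintype.card ((Fin FA ×ₗ Fin FD) ×ₗ Fin FS) = FA * FD * FS := by
    simp [Fintype.card_lex]
  have e2 : Fintype.card (Fin NA ⊕ₗ ((Fin FA ×ₗ Fin FD) ×ₗ Fin NS)) = NA + FA * FD * NS := by
    simp [Fintype.card_lex]
  have := (step_good hA hD hS).transport (Fintype.orderIsoFinOfCardEq _ e1).symm
    (Fintype.orderIsoFinOfCardEq _ e2).symm
  exact ⟨_, this⟩

end step

/-! ## Base cases -/

lemma base_D (g : ℕ) : GoodD 0 2 g (fun (r : Fin 2) (j : Fin g) => if r = 0 then j else Fin.rev j) := by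
  refine ⟨fun r => ?_, fun c => ?_, fun a b hab => ?_⟩
  · by_cases h : r = 0
    · simp only [h, if_true]; exact fun _ _ h => h
    · simp only [h, if_false]; exact Fin.rev_injective
  · have e : Fin 2 ≃ {p : Fin 2 × Fin g // (if p.1 = 0 then p.2 else Fin.rev p.2) = c} := {
      toFun := fun r => ⟨(r, if r = 0 then c else Fin.rev c), by by_cases h : r = 0 <;> simp [h]⟩
      invFun := fun p => p.1.1
      left_inv := fun r => rfl
      right_inv := by
        rintro ⟨⟨r, j⟩, h⟩
        by_cases hr : r = 0
        · simp [hr] at h ⊢; exact h.symm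
        · simp [hr] at h ⊢; rw [← h]; simp }
    rw [← Nat.card_congr e]; simp
  · rintro ⟨f, h1, h2, h3⟩
    have q0 := h2 0 (by omega) rfl
    have q2 := h2 2 (by omega) rfl
    have p1 := h3 1 (by omega) rfl
    have l0 := h1 0 (by omega)
    have l1 := h1 1 (by omega)
    simp only [Nat.reduceAdd] at l0 l1
    generalize f 0 = x0 at *
    generalize f 1 = x1 at *
    generalize f 2 = x2 at *
    obtain ⟨⟨r0, j0⟩, rfl⟩ := toLex.surjective x0
    obtain ⟨⟨r1, j1⟩, rfl⟩ := toLex.surjective x1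
    obtain ⟨⟨r2, j2⟩, rfl⟩ := toLex.surjective x2
    simp only [Prod.Lex.lt_iff, ofLex_toLex] at *
    have := j0.isLt
    have := j1.isLt
    have := j2.isLt
    rw [Fin.lt_def] at hab
    simp only [Fin.lt_def, Fin.ext_iff] at l0 l1
    have v : ∀ r : Fin 2, (r = 0 ∧ r.val = 0) ∨ (r ≠ 0 ∧ r.val = 1) := by decide
    rcases v r0 with ⟨z0, w0⟩ | ⟨z0, w0⟩ <;> rcases v r1 with ⟨z1, w1⟩ | ⟨z1, w1⟩ <;>
      rcases v r2 with ⟨z2, w2⟩ | ⟨z2, w2⟩ <;> rw [w0, w1] at l0 <;> rw [w1, w2] at l1 <;>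
      simp only [z0, if_true, if_false, Fin.ext_iff, Fin.val_rev] at q0 <;>
      simp only [z1, if_true, if_false, Fin.ext_iff, Fin.val_rev] at p1 <;>
      simp only [z2, if_true, if_false, Fin.ext_iff, Fin.val_rev] at q2 <;>
      omega

lemma base_k (t m : ℕ) : GoodA t 1 m (fun (_ : Fin 1) (j : Fin m) => j) := by
  refine ⟨fun r => strictMono_id, fun c => ?_, fun a b hab => ?_⟩
  · rw [Nat.card_eq_one_iff_exists]
    refine ⟨⟨(0, c), rfl⟩, ?_⟩
    rintro ⟨⟨r, j⟩, h⟩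
    exact Subtype.ext (Prod.ext (Subsingleton.elim _ _) h)
  · refine Or.inr ⟨0, ⟨a, rfl⟩, ⟨b, rfl⟩, fun r _ _ => Subsingleton.elim _ _,
      fun r r' _ _ h => ?_, fun r r' _ _ _ h => ?_⟩ <;>
    exact absurd h (by rw [Subsingleton.elim r r']; exact lt_irrefl _)

lemma base_m (t μ : ℕ) : GoodA t μ 0 (fun (_ : Fin 1) (j : Fin 0) => j) :=
  ⟨fun _ => strictMono_id, fun c => c.elim0, fun a => a.elim0⟩

/-! ## The Ackermann hierarchy -/

/-- `ackA d` is the (Galois) inverse of `alphaHier (d+1)`. -/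
def ackA : ℕ → ℕ → ℕ
  | 0, j => 2 * j
  | _ + 1, 0 => 1
  | d + 1, j + 1 => ackA d (ackA (d + 1) j)
  termination_by d j => (d, j)

lemma ackA_zero (j : ℕ) : ackA 0 j = 2 * j := by rw [ackA]
lemma ackA_succ_zero (d : ℕ) : ackA (d + 1) 0 = 1 := by rw [ackA]
lemma ackA_succ_succ (d j : ℕ) : ackA (d + 1) (j + 1) = ackA d (ackA (d + 1) j) := by rw [ackA]

lemma ackA_aux (d : ℕ) : StrictMono (ackA d) ∧ (∀ j, j ≤ ackA d j) ∧
    (∀ j, 1 ≤ j → j + 1 ≤ ackA d j) := by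
  induction d with
  | zero =>
    refine ⟨fun a b h => ?_, fun j => ?_, fun j hj => ?_⟩ <;> simp only [ackA_zero] <;> omega
  | succ d ih =>
    obtain ⟨h1, h2, h3⟩ := ih
    have hj : ∀ j, j + 1 ≤ ackA (d + 1) j := by
      intro j
      induction j with
      | zero => rw [ackA_succ_zero]
      | succ j ih =>
        rw [ackA_succ_succ]
        have := h3 (ackA (d + 1) j) (by omega)
        omega
    refine ⟨strictMono_nat_of_lt_succ fun j => ?_, fun j => by have := hj j; omega,
      fun j _ => hj j⟩
    rw [ackA_succ_succ]
    have := h3 (ackA (d + 1) j) (by have := hj j; omega)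
    omega

lemma ackA_mono (d : ℕ) : Monotone (ackA d) := (ackA_aux d).1.monotone

lemma ackA_ge (d j : ℕ) : j ≤ ackA d j := (ackA_aux d).2.1 j

lemma ackA_gt (d j : ℕ) : j + 1 ≤ ackA (d + 1) j := by
  rcases Nat.eq_zero_or_pos j with rfl | h
  · rw [ackA_succ_zero]
  · exact (ackA_aux (d + 1)).2.2 j h

lemma ackA_le_succ (d j : ℕ) : ackA d j ≤ ackA (d + 1) j := by
  cases j with
  | zero =>
    rw [ackA_succ_zero]
    cases d with
    | zero => simp [ackA_zero]
    | succ d => rw [ackA_succ_zero]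
  | succ j =>
    rw [ackA_succ_succ]
    exact ackA_mono d (ackA_gt d j)

lemma ackA_mono_left {d e : ℕ} (h : d ≤ e) (j : ℕ) : ackA d j ≤ ackA e j :=
  monotone_nat_of_le_succ (f := fun d => ackA d j) (fun d => ackA_le_succ d j) h

lemma ackA_one (j : ℕ) : ackA 1 j = 2 ^ j := by
  induction j with
  | zero => rw [ackA_succ_zero]; rfl
  | succ j ih => rw [ackA_succ_succ, ih, ackA_zero, pow_succ]; ring

lemma two_pow_le_ackA (d j : ℕ) : 2 ^ j ≤ ackA (d + 1) j := by
  rw [← ackA_one]; exact ackA_mono_left (by omega) j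

lemma ackA_at_one (d : ℕ) : ackA d 1 = 2 := by
  induction d with
  | zero => rw [ackA_zero]
  | succ d ih => rw [ackA_succ_succ, ackA_succ_zero, ih]

lemma ackA_at_two (d : ℕ) : ackA d 2 = 4 := by
  induction d with
  | zero => rw [ackA_zero]
  | succ d ih => rw [ackA_succ_succ, ackA_at_one, ih]

lemma ackA_at_three (d : ℕ) : ackA (d + 1) 3 = ackA d 4 := by
  rw [ackA_succ_succ, ackA_at_two]

lemma ackA_at_four (d : ℕ) : ackA (d + 1) 4 = ackA d (ackA d 4) := by
  rw [ackA_succ_succ, ackA_at_three]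

lemma ackA_four_ge (d : ℕ) : 2 ^ (d + 4) ≤ ackA (d + 1) 4 := by
  induction d with
  | zero => rw [ackA_one]
  | succ d ih =>
    rw [ackA_at_four]
    have h1 := two_pow_le_ackA d (ackA (d + 1) 4)
    have h2 : d + 1 + 4 ≤ ackA (d + 1) 4 := by
      have := Nat.lt_two_pow_self (n := d + 4)
      omega
    exact (Nat.pow_le_pow_right (by norm_num) h2).trans h1

/-! ## Galois connection with the inverse hierarchy -/

lemma alphaHier_aux (d : ℕ) : (∀ m j, alphaHier (d + 1) m ≤ j ↔ m ≤ ackA d j) ∧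
    (∀ m, 2 ≤ m → alphaHier (d + 1) m < m) := by
  have second : ∀ d, (∀ m j, alphaHier (d + 1) m ≤ j ↔ m ≤ ackA d j) →
      (∀ m, 2 ≤ m → alphaHier (d + 1) m < m) := by
    intro d h m hm
    have : alphaHier (d + 1) m ≤ m - 1 := by
      rw [h]
      have := (ackA_aux d).2.2 (m - 1) (by omega)
      omega
    omega
  induction d with
  | zero =>
    have h : ∀ m j, alphaHier (0 + 1) m ≤ j ↔ m ≤ ackA 0 j := by
      intro m j
      rw [ackA_zero, zero_add, alphaHier]
      omega
    exact ⟨h, second 0 h⟩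
  | succ d ih =>
    obtain ⟨h1, h2⟩ := ih
    have h : ∀ m j, alphaHier (d + 1 + 1) m ≤ j ↔ m ≤ ackA (d + 1) j := by
      have key : ∀ fuel m j, m ≤ fuel →
          (iterCount (alphaHier (d + 1)) fuel m ≤ j ↔ m ≤ ackA (d + 1) j) := by
        intro fuel
        induction fuel with
        | zero =>
          intro m j hm
          simp only [iterCount]
          constructor <;> intros <;> omega
        | succ fuel ih =>
          intro m j hm
          rw [iterCount]
          split_ifs with hm1
          · have := ackA_gt d j
            constructor <;> intros <;> omega
          · have hlt := h2 m (by omega)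
            cases j with
            | zero => rw [ackA_succ_zero]; omega
            | succ j =>
              have := ih (alphaHier (d + 1) m) j (by omega)
              rw [ackA_succ_succ, ← h1, ← this]
              omega
      intro m j
      rw [alphaHier]
      exact key m m j le_rfl
    exact ⟨h, second _ h⟩

lemma lt_of_invAck {n d : ℕ} (h : d + 1 < invAck n) : ackA d 3 < n := by
  have := Nat.notMem_of_lt_sInf h
  simp only [Set.mem_ofPred_eq, not_and] at this
  have h2 := this (by omega)
  rw [(alphaHier_aux d).1] at h2
  omega

/-! ## Existence with size bounds -/

lemma size_step {d m FA FD FS NA ND NS : ℕ}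
    (hFS : FS ≤ ackA (d + 2) (8 * m + 8)) (hNS : NS ≤ ackA (d + 2) (8 * m + 8))
    (hFD : FD ≤ ackA (d + 1) (8 * FS + 8)) (hND : ND ≤ ackA (d + 1) (8 * FS + 8))
    (hFA : FA ≤ ackA (d + 1) (8 * ND + 8)) (hNA : NA ≤ ackA (d + 1) (8 * ND + 8)) :
    FA * FD * FS ≤ ackA (d + 2) (8 * (m + 1) + 8) ∧
    NA + FA * FD * NS ≤ ackA (d + 2) (8 * (m + 1) + 8) := by
  set x := ackA (d + 2) (8 * m + 8) with hx
  set A := ackA (d + 1) with hA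
  have Am : Monotone A := ackA_mono _
  have Age : ∀ j, j + 1 ≤ A j := ackA_gt d
  have Apow : ∀ j, 2 ^ j ≤ A j := two_pow_le_ackA d
  have pow8 : ∀ j, 9 ≤ j → 8 * j + 8 ≤ 2 ^ j := by
    intro j hj
    induction j, hj using Nat.le_induction with
    | base => norm_num
    | succ j hj ih => rw [pow_succ]; omega
  have powcube : ∀ j, 10 ≤ j → j ^ 3 ≤ 2 ^ j := by
    intro j hj
    induction j, hj using Nat.le_induction with
    | base => norm_num
    | succ j hj ih => rw [pow_succ 2]; nlinarith [Nat.mul_le_mul hj hj]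
  have x9 : 9 ≤ x := by
    have := ackA_gt (d + 1) (8 * m + 8)
    simp only [← hx, show d + 1 + 1 = d + 2 from rfl] at this
    omega
  have hgoal : ackA (d + 2) (8 * (m + 1) + 8) = A (A (A (A (A (A (A (A x))))))) := by
    rw [show 8 * (m + 1) + 8 = 8 * m + 8 + 1 + 1 + 1 + 1 + 1 + 1 + 1 + 1 by ring]
    simp only [show d + 2 = d + 1 + 1 from rfl] at hx ⊢
    rw [hx, hA]
    generalize 8 * m + 8 = w
    simp only [ackA_succ_succ (d + 1)]
  set y := A (A x) with hy
  have hy' : A (8 * FS + 8) ≤ y := Am (by have := pow8 x x9; have := Apow x; omega)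
  have xy : x ≤ y := by have := Age x; have := Age (A x); omega
  set z := A (A y) with hz
  have hz' : A (8 * ND + 8) ≤ z := Am (by have := pow8 y (by omega); have := Apow y; omega)
  have yz : y + 2 ≤ z := by have := Age y; have := Age (A y); omega
  have prod : ∀ w, w ≤ z → FA * FD * w ≤ z ^ 3 := by
    intro w hw
    calc FA * FD * w ≤ z * z * z := by gcongr <;> omega
      _ = z ^ 3 := by ring
  have big : z + z ^ 3 ≤ A (A z) := by
    have h1 := powcube z (by omega)
    have h2 := Apow z
    have h3 := Apow (A z)
    have h4 : 2 ^ (z + 1) ≤ 2 ^ (A z) := Nat.pow_le_pow_right (by norm_num) (Age z)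
    have h5 : z ≤ z ^ 3 := Nat.le_self_pow (by norm_num) z
    rw [pow_succ] at h4
    omega
  have big2 : A (A z) ≤ A (A (A (A z))) := by
    have := Age (A (A z)); have := Age (A (A (A z))); omega
  rw [hgoal]
  have p1 := prod FS (by omega)
  have p2 := prod NS (by omega)
  constructor <;> omega

lemma exists_goodA (t : ℕ) : ∀ k m : ℕ, ∃ F N : ℕ, 1 ≤ F ∧ F ≤ ackA (k + 1) (8 * m + 8) ∧
    N ≤ ackA (k + 1) (8 * m + 8) ∧
    ∃ X : Fin F → Fin m → Fin N, GoodA (t + 1) (2 ^ (k.choose (t + 1))) m X := by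
  induction t with
  | zero =>
    intro k
    induction k with
    | zero =>
      intro m
      have := ackA_gt 0 (8 * m + 8)
      exact ⟨1, m, le_rfl, by omega, by omega, _, base_k _ _⟩
    | succ k ihk =>
      intro m
      induction m with
      | zero => exact ⟨1, 0, le_rfl, by have := ackA_gt (k + 1) 8; simp only [mul_zero, zero_add]; omega, by omega, _, base_m _ _⟩
      | succ m ihm =>
        obtain ⟨FS, NS, hS1, hS2, hS3, XS, hS⟩ := ihm
        obtain ⟨FA, NA, hA1, hA2, hA3, XA, hA⟩ := ihk FS
        have hD := base_D FS
        have he : 2 ^ ((k + 1).choose (0 + 1)) = 2 ^ (k.choose (0 + 1)) * 2 := by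
          simp [pow_succ]
        rw [he] at hS ⊢
        have hg := ackA_gt k (8 * FS + 8)
        have hb := size_step (d := k) (FD := 2) (ND := FS) hS2 hS3 (by omega) (by omega) hA2 hA3
        exact ⟨_, _, Nat.mul_pos (Nat.mul_pos hA1 (by norm_num)) hS1, hb.1, hb.2, step_fin hA hD hS⟩
  | succ t iht =>
    intro k
    induction k with
    | zero =>
      intro m
      have := ackA_gt 0 (8 * m + 8)
      exact ⟨1, m, le_rfl, by omega, by omega, _, base_k _ _⟩
    | succ k ihk =>
      intro m
      induction m with
      | zero => exact ⟨1, 0, le_rfl, by have := ackA_gt (k + 1) 8; simp only [mul_zero, zero_add]; omega, by omega, _, base_m _ _⟩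
      | succ m ihm =>
        obtain ⟨FS, NS, hS1, hS2, hS3, XS, hS⟩ := ihm
        obtain ⟨FD, ND, hD1, hD2, hD3, XD, hD⟩ := iht k FS
        obtain ⟨FA, NA, hA1, hA2, hA3, XA, hA⟩ := ihk ND
        have he : 2 ^ ((k + 1).choose (t + 1 + 1)) =
            2 ^ (k.choose (t + 1 + 1)) * 2 ^ (k.choose (t + 1)) := by
          rw [Nat.choose_succ_succ, pow_add, mul_comm]
        rw [he] at hS ⊢
        have hb := size_step (d := k) hS2 hS3 hD2 hD3 hA2 hA3
        exact ⟨_, _, Nat.mul_pos (Nat.mul_pos hA1 hD1) hS1, hb.1, hb.2,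
          step_fin hA hD.goodD hS⟩

/-! ## The final matrix -/

lemma not_contains_of {n q : ℕ} (M : Fin n → Fin n → Bool)
    (h : ∀ a b : Fin n, a < b →
      ¬ HasAlt (fun i => M i a = true) (fun i => M i b = true) (2 * q + 3)) :
    ¬ MatContains M (DS (2 * q + 3)) := by
  rintro ⟨r, c, hr, hc, hM⟩
  refine h (c 0) (c 1) (hc (by decide)) ⟨fun i => if hi : i < 2 * q + 3 then r ⟨i, hi⟩ else r 0,
    fun i hi => ?_, fun i hi he => ?_, fun i hi he => ?_⟩
  · simp only [hi, show i < 2 * q + 3 by omega, dif_pos]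
    exact hr (by simp)
  · simp only [hi, dif_pos]
    refine hM _ _ ?_
    simp only [DS, Fin.val_one, decide_eq_true_eq]
    omega
  · simp only [hi, dif_pos]
    refine hM _ _ ?_
    simp only [DS, Fin.val_zero, decide_eq_true_eq]
    omega

lemma final_matrix {t μ m n F N : ℕ} (X : Fin F → Fin m → Fin N) (hX : GoodA (t + 1) μ m X)
    (hF : 1 ≤ F) (hFN : 2 * F = N) (hN : N ≤ n) :
    ∃ M : Fin n → Fin n → Bool, ¬ MatContains M (DS (2 * (t + 1) + 3)) ∧
      ∀ j : Fin n, μ ≤ colOnes M j := by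
  classical
  have hNp : 0 < N := by omega
  let P : ℕ → ℕ → Prop := fun i j => i / F = j / N ∧
    Occ X ⟨j % N, Nat.mod_lt _ hNp⟩ ⟨i % F, Nat.mod_lt _ hF⟩
  refine ⟨fun i j => decide (P i j), not_contains_of _ fun a b hab => ?_, fun j => ?_⟩
  · simp only [decide_eq_true_eq]
    have hdiv : (a : ℕ) / N ≤ (b : ℕ) / N := Nat.div_le_div_right hab.le
    rintro ⟨f, h1, h2, h3⟩
    rcases hdiv.eq_or_lt with he | hl
    · have hmod : (a : ℕ) % N < (b : ℕ) % N := by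
        have h1 := Nat.div_add_mod (a : ℕ) N
        have h2 := Nat.div_add_mod (b : ℕ) N
        rw [he] at h1
        have : (a : ℕ) < b := hab
        omega
      refine hX.goodD.noAlt (a := ⟨a % N, Nat.mod_lt _ hNp⟩) (b := ⟨b % N, Nat.mod_lt _ hNp⟩)
        hmod ⟨fun i => ⟨f i % F, Nat.mod_lt _ hF⟩, fun i hi => ?_, fun i hi he => (h2 i hi he).2,
          fun i hi he => (h3 i hi he).2⟩
      have hd : ∀ i < 2 * (t + 1) + 3, (f i : ℕ) / F = (b : ℕ) / N := by
        intro i hi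
        rcases Nat.mod_two_eq_zero_or_one i with h | h
        · exact (h2 i hi h).1
        · exact (h3 i hi h).1.trans he
      have e1 := Nat.div_add_mod (f i : ℕ) F
      have e2 := Nat.div_add_mod (f (i + 1) : ℕ) F
      rw [hd i (by omega)] at e1
      rw [hd (i + 1) hi] at e2
      have : (f i : ℕ) < f (i + 1) := h1 i hi
      change (f i : ℕ) % F < (f (i + 1) : ℕ) % F
      omega
    · have q0 := (h2 0 (by omega) rfl).1
      have p1 := (h3 1 (by omega) rfl).1
      have l : (f 0 : ℕ) ≤ f 1 := (h1 0 (by omega)).le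
      have := Nat.div_le_div_right (c := F) l
      omega
  · rw [← hX.2.1 ⟨j % N, Nat.mod_lt _ hNp⟩, colOnes]
    have hb : ∀ r : Fin F, (j : ℕ) / N * F + r < n := by
      intro r
      have h1 := Nat.div_mul_le_self (j : ℕ) N
      have h2 := r.isLt
      have h3 := j.isLt
      have h4 : (j : ℕ) / N * N = 2 * ((j : ℕ) / N * F) := by rw [← hFN]; ring
      omega
    refine Nat.card_le_card_of_injective
      (fun p => ⟨⟨(j : ℕ) / N * F + p.1.1, hb _⟩, ?_⟩) ?_
    · simp only [decide_eq_true_eq, P]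
      constructor
      · rw [add_comm, Nat.add_mul_div_right _ _ hF, Nat.div_eq_of_lt p.1.1.isLt, zero_add]
      · refine ⟨p.1.2, ?_⟩
        have : (⟨((j : ℕ) / N * F + p.1.1) % F, Nat.mod_lt _ hF⟩ : Fin F) = p.1.1 := by
          apply Fin.ext
          simp [Nat.mod_eq_of_lt]
        rw [this]; exact p.2
    · rintro ⟨⟨r, s⟩, h⟩ ⟨⟨r', s'⟩, h'⟩ he
      simp only [Subtype.mk.injEq, Fin.mk.injEq, add_right_inj] at he
      have hr : r = r' := Fin.ext he
      subst hr
      have := (hX.1 r).injective (h.trans h'.symm)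
      dsimp only at this
      subst this
      rfl

lemma exists_matrix (t k n : ℕ) (hn : ackA (k + 4) 3 ≤ n) :
    ∃ M : Fin n → Fin n → Bool, ¬ MatContains M (DS (2 * (t + 1) + 3)) ∧
      ∀ j : Fin n, 2 ^ (k.choose (t + 1)) ≤ colOnes M j := by
  set μ := 2 ^ (k.choose (t + 1)) with hμ
  have hμp : 0 < μ := by positivity
  obtain ⟨F, N, hF, -, hN, X, hX⟩ := exists_goodA t k (2 * μ)
  have hFN : 2 * F = N := by
    have e : (Fin F × Fin (2 * μ)) ≃ Σ c : Fin N, {p : Fin F × Fin (2 * μ) // X p.1 p.2 = c} :=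
      (Equiv.sigmaFiberEquiv (fun p : Fin F × Fin (2 * μ) => X p.1 p.2)).symm
    have := Nat.card_congr e
    rw [Nat.card_sigma] at this
    simp only [hX.2.1] at this
    simp at this
    have h : (2 * F) * μ = N * μ := by rw [← hμ] at this; linarith
    exact Nat.eq_of_mul_eq_mul_right hμp h
  refine final_matrix X hX hF hFN (hN.trans (le_trans ?_ hn))
  rw [ackA_at_three, ackA_at_four]
  refine (ackA_mono_left (by omega : k + 1 ≤ k + 2) _).trans (ackA_mono _ ?_)
  have h1 := ackA_four_ge k
  have h2 := two_pow_le_ackA k (ackA (k + 1) 4)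
  rw [← ackA_at_four] at h2
  refine le_trans ?_ h2
  have h3 : k.choose (t + 1) ≤ 2 ^ k := Nat.choose_le_two_pow _ _
  have h4 : 2 ^ k + 5 ≤ ackA (k + 1) 4 := by
    have : 1 ≤ 2 ^ k := Nat.one_le_two_pow
    rw [pow_add] at h1
    omega
  have h5 : 2 ^ (k.choose (t + 1)) ≤ 2 ^ (2 ^ k) := Nat.pow_le_pow_right (by norm_num) h3
  have h6 : 2 ^ (2 ^ k + 5) ≤ 2 ^ (ackA (k + 1) 4) := Nat.pow_le_pow_right (by norm_num) h4
  rw [pow_add] at h6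
  have : 1 ≤ 2 ^ (2 ^ k) := Nat.one_le_two_pow
  omega

lemma exists_matrix_one (t n : ℕ) :
    ∃ M : Fin n → Fin n → Bool, ¬ MatContains M (DS (2 * (t + 1) + 3)) ∧
      ∀ j : Fin n, 1 ≤ colOnes M j := by
  refine ⟨fun i j => decide (i = j), not_contains_of _ ?_, fun j => ?_⟩
  · rintro a b hab ⟨f, h1, h2, h3⟩
    simp only [decide_eq_true_eq] at h2 h3
    have := chain_strict h1 (i := 0) (j := 2) (by omega) (by omega)
    rw [h2 0 (by omega) rfl, h2 2 (by omega) rfl] at this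
    exact lt_irrefl _ this
  · rw [colOnes]
    simp

lemma exponent_bound (t a : ℕ) (ht : 1 ≤ t) :
    (1 / (Nat.factorial t : ℝ)) * (a : ℝ) ^ t - ((t : ℝ) * (6 + t)) * (a : ℝ) ^ (t - 1) ≤
      (((a - 6).choose t : ℕ) : ℝ) := by
  have hf : (1 : ℝ) ≤ (Nat.factorial t : ℝ) := by exact_mod_cast Nat.one_le_iff_ne_zero.2 (Nat.factorial_ne_zero t)
  have hpow : (a : ℝ) ^ t = a ^ (t - 1) * a := by
    rw [← pow_succ, Nat.sub_add_cancel ht]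
  have hp0 : (0 : ℝ) ≤ (a : ℝ) ^ (t - 1) := by positivity
  have ht' : (1 : ℝ) ≤ t := by exact_mod_cast ht
  by_cases ha : a ≤ 6 + t
  · have ha' : (a : ℝ) ≤ 6 + t := by exact_mod_cast ha
    have h1 : (1 / (Nat.factorial t : ℝ)) * (a : ℝ) ^ t ≤ a ^ t := by
      refine mul_le_of_le_one_left (by positivity) ?_
      rw [div_le_one (by linarith)]; exact hf
    have h2 : (a : ℝ) ^ t ≤ ((t : ℝ) * (6 + t)) * (a : ℝ) ^ (t - 1) := by
      rw [hpow, mul_comm]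
      refine mul_le_mul_of_nonneg_right ?_ hp0
      nlinarith
    have : (0 : ℝ) ≤ (((a - 6).choose t : ℕ) : ℝ) := by positivity
    linarith
  · push Not at ha
    have hapos : (0 : ℝ) < a := by exact_mod_cast (by omega : 0 < a)
    have h1 : (a - (6 + t)) ^ t ≤ (Nat.factorial t) * (a - 6).choose t := by
      rw [← Nat.descFactorial_eq_factorial_mul_choose]
      refine le_trans (Nat.pow_le_pow_left ?_ t) (Nat.pow_sub_le_descFactorial (a - 6) t)
      omega
    have h1' : ((a : ℝ) - (6 + t)) ^ t ≤ (Nat.factorial t : ℝ) * ((a - 6).choose t : ℕ) := by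
      have : ((a - (6 + t) : ℕ) : ℝ) = (a : ℝ) - (6 + t) := by
        rw [Nat.cast_sub ha.le]; push_cast; ring
      rw [← this]; exact_mod_cast h1
    have hx : ((6 : ℝ) + t) / a ≤ 1 := by
      rw [div_le_one hapos]; exact_mod_cast ha.le
    have hb := one_add_mul_le_pow (a := -(((6 : ℝ) + t) / a)) (by linarith) t
    have h2 : (a : ℝ) ^ t - t * (6 + t) * a ^ (t - 1) ≤ ((a : ℝ) - (6 + t)) ^ t := by
      have := mul_le_mul_of_nonneg_left hb (pow_nonneg hapos.le t)
      rw [← mul_pow] at this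
      have e1 : (a : ℝ) * (1 + -((6 + t) / a)) = a - (6 + t) := by field_simp; ring
      have e2 : (a : ℝ) ^ t * (1 + t * -((6 + t) / a)) = a ^ t - t * (6 + t) * a ^ (t - 1) := by
        rw [hpow]; field_simp; ring
      rw [e1, e2] at this
      exact this
    have h3 : (t : ℝ) * (6 + t) * a ^ (t - 1) ≤ (Nat.factorial t : ℝ) * (t * (6 + t) * a ^ (t - 1)) :=
      le_mul_of_one_le_left (by positivity) hf
    have h4 : (a : ℝ) ^ t - (Nat.factorial t : ℝ) * (t * (6 + t) * a ^ (t - 1)) ≤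
        (Nat.factorial t : ℝ) * ((a - 6).choose t : ℕ) := by linarith
    have hfp : (0 : ℝ) < (Nat.factorial t : ℝ) := by linarith
    refine le_of_mul_le_mul_left ?_ hfp
    calc _ = (a : ℝ) ^ t - (Nat.factorial t : ℝ) * (t * (6 + t) * a ^ (t - 1)) := by field_simp
      _ ≤ _ := h4

lemma matOnes_eq {m n : ℕ} (M : Fin m → Fin n → Bool) : matOnes M = ∑ j, colOnes M j := by
  have e : {p : Fin m × Fin n // M p.1 p.2 = true} ≃ Σ j : Fin n, {i : Fin m // M i j = true} := {
    toFun := fun p => ⟨p.1.2, ⟨p.1.1, p.2⟩⟩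
    invFun := fun x => ⟨(x.2.1, x.1), x.2.2⟩
    left_inv := fun _ => rfl
    right_inv := fun _ => rfl }
  rw [matOnes, Nat.card_congr e, Nat.card_sigma]
  rfl

lemma le_exMat {p q n : ℕ} (S : Fin p → Fin q → Bool) (M : Fin n → Fin n → Bool)
    (h : ¬ MatContains M S) : matOnes M ≤ exMat S n := by
  refine le_csSup ⟨n * n, ?_⟩ ⟨M, h, rfl⟩
  rintro x ⟨M', -, rfl⟩
  have := Nat.card_le_card_of_injective
    (Subtype.val : {p : Fin n × Fin n // M' p.1 p.2 = true} → Fin n × Fin n) Subtype.val_injective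
  simpa [matOnes] using this

/-- For every `t ≥ 1` there is a constant `C_t` such that for every
`n ≥ 1` there exists an `n × n` (0,1)-matrix avoiding `DS_{2t+3}` with at least
`2^((1/t!)·α(n)^t − C_t·α(n)^(t−1))` `1`-entries in every column; in particular
`ex_{DS_{2t+3}}(n) ≥ n·2^((1/t!)·α(n)^t − C_t·α(n)^(t−1))`. -/
theorem ds_odd_avoiding_construction :
    ∀ t : ℕ, 1 ≤ t → ∃ C : ℝ, ∀ n : ℕ, 1 ≤ n →
      (∃ M : Fin n → Fin n → Bool, ¬ MatContains M (DS (2 * t + 3)) ∧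
        ∀ j : Fin n, (2 : ℝ) ^ ((1 / (Nat.factorial t : ℝ)) * (invAck n : ℝ) ^ t
          - C * (invAck n : ℝ) ^ (t - 1)) ≤ (colOnes M j : ℝ)) ∧
      (n : ℝ) * (2 : ℝ) ^ ((1 / (Nat.factorial t : ℝ)) * (invAck n : ℝ) ^ t
          - C * (invAck n : ℝ) ^ (t - 1)) ≤ (exMat (DS (2 * t + 3)) n : ℝ) := by
  intro t ht
  refine ⟨(t : ℝ) * (6 + t), fun n hn => ?_⟩
  have hM : ∃ M : Fin n → Fin n → Bool, ¬ MatContains M (DS (2 * t + 3)) ∧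
      ∀ j : Fin n, 2 ^ ((invAck n - 6).choose t) ≤ colOnes M j := by
    obtain ⟨s, rfl⟩ : ∃ s, t = s + 1 := ⟨t - 1, by omega⟩
    by_cases h6 : invAck n ≤ 6
    · have : (invAck n - 6).choose (s + 1) = 0 := by
        rw [Nat.sub_eq_zero_of_le h6, Nat.choose_zero_succ]
      rw [this, pow_zero]
      exact exists_matrix_one s n
    · refine exists_matrix s (invAck n - 6) n (lt_of_invAck ?_).le
      omega
  obtain ⟨M, hM1, hM2⟩ := hM
  have hcol : ∀ j : Fin n, (2 : ℝ) ^ ((1 / (Nat.factorial t : ℝ)) * (invAck n : ℝ) ^ t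
      - ((t : ℝ) * (6 + t)) * (invAck n : ℝ) ^ (t - 1)) ≤ (colOnes M j : ℝ) := by
    intro j
    refine (Real.rpow_le_rpow_of_exponent_le one_le_two (exponent_bound t (invAck n) ht)).trans ?_
    rw [Real.rpow_natCast]
    exact_mod_cast hM2 j
  refine ⟨⟨M, hM1, hcol⟩, ?_⟩
  refine le_trans ?_ (Nat.cast_le.2 (le_exMat _ M hM1))
  rw [matOnes_eq, Nat.cast_sum]
  have := Finset.card_nsmul_le_sum (Finset.univ : Finset (Fin n))
    (fun j => (colOnes M j : ℝ)) _ (fun j _ => hcol j)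
  simpa [nsmul_eq_mul] using this
end

section
/- For every integer k ≥ 1 and every integer n ≥ 1, every n×n (0,1)-matrix that avoids DS_{k+1} is not (k+1)-full; consequently, p_k(n) ≥ ex_{DS_{k+1}}(n). -/
/-- The word `l` of columns embeds in increasing rows, starting from row `r`. -/
def EmbWord {A : Type} (P : ℕ → A → Prop) : List A → ℕ → Prop
  | [], _ => True
  | j :: l, r => ∃ x, r ≤ x ∧ P x j ∧ EmbWord P l (x + 1)

/-- The alternating word `a b a b ...` of given length. -/
def altWord {A : Type} (a b : A) : ℕ → List A
  | 0 => []
  | n + 1 => a :: altWord b a n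

lemma EmbWord.mono {A : Type} {P : ℕ → A → Prop} {l : List A} {r r' : ℕ}
    (h : EmbWord P l r) (hr : r' ≤ r) : EmbWord P l r' := by
  cases l with
  | nil => trivial
  | cons j l =>
    obtain ⟨x, hx, h1, h2⟩ := h
    exact ⟨x, hr.trans hx, h1, h2⟩

lemma embWord_of_rows {A : Type} {P : ℕ → A → Prop} (l : List A) (r : ℕ) (f : ℕ → ℕ)
    (hf : ∀ i j, i < j → j < l.length → f i < f j) (hr : ∀ i < l.length, r ≤ f i)
    (hP : ∀ (i : ℕ) (h : i < l.length), P (f i) l[i]) : EmbWord P l r := by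
  induction l generalizing r f with
  | nil => trivial
  | cons a l ih =>
    refine ⟨f 0, hr 0 (by simp), hP 0 (by simp), ih (f 0 + 1) (fun i => f (i + 1)) ?_ ?_ ?_⟩
    · intro i j hij hj
      exact hf _ _ (by omega) (by simpa using hj)
    · intro i hi
      exact hf 0 (i + 1) (by omega) (by simpa using hi)
    · intro i hi
      exact hP (i + 1) (by simpa using hi)

lemma rows_of_embAlt {A : Type} {P : ℕ → A → Prop} (m : ℕ) (a b : A) (r : ℕ)
    (h : EmbWord P (altWord a b m) r) :
    ∃ f : ℕ → ℕ, (∀ i j, i < j → j < m → f i < f j) ∧ (∀ i < m, r ≤ f i) ∧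
      ∀ i < m, P (f i) (if i % 2 = 0 then a else b) := by
  induction m generalizing a b r with
  | zero => exact ⟨id, by simp, by simp, by simp⟩
  | succ m ih =>
    obtain ⟨x, hx, h1, h2⟩ := h
    obtain ⟨f, hf, hr, hP⟩ := ih b a (x + 1) h2
    refine ⟨fun i => if i = 0 then x else f (i - 1), ?_, ?_, ?_⟩
    · intro i j hij hj
      have hj0 : j ≠ 0 := by omega
      by_cases hi : i = 0
      · have := hr (j - 1) (by omega)
        simp only [hi, hj0, if_true, if_false]
        omega
      · simp only [hi, hj0, if_false]
        exact hf _ _ (by omega) (by omega)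
    · intro i hi
      by_cases h0 : i = 0
      · simpa [h0] using hx
      · have := hr (i - 1) (by omega)
        simp only [h0, if_false]
        omega
    · intro i hi
      rcases i with _ | i
      · simpa using h1
      · have := hP i (by omega)
        rcases Nat.mod_two_eq_zero_or_one i with h0 | h0
        · have h3 : (i + 1) % 2 = 1 := by omega
          simpa [h0, h3] using this
        · have h3 : (i + 1) % 2 = 0 := by omega
          simpa [h0, h3] using this

/-- Greedy argument: if all orderings of `S` embed, some alternating word embeds. -/
lemma exists_alt {A : Type} [DecidableEq A] {P : ℕ → A → Prop} (m : ℕ) :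
    ∀ (R : A → A → Prop) (_ : ∀ a b, a ≠ b → R a b ∨ R b a) (S : Finset A) (r : ℕ),
      S.card = m + 2 → (∀ l : List A, l.Nodup → l.toFinset = S → EmbWord P l r) →
      ∃ a b, R a b ∧ EmbWord P (altWord a b (m + 2)) r ∧ a ∈ S ∧ b ∈ S := by
  induction m with
  | zero =>
    intro R hR S r hS hl
    obtain ⟨x, y, hxy, rfl⟩ := Finset.card_eq_two.mp hS
    rcases hR x y hxy with h | h
    · exact ⟨x, y, h, hl [x, y] (by simp [hxy]) (by simp), by simp, by simp⟩
    · exact ⟨y, x, h, hl [y, x] (by simp [hxy.symm])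
        (by ext; simp [or_comm]), by simp, by simp⟩
  | succ m ih =>
    intro R hR S r hS hl
    classical
    have hcons : ∀ j ∈ S, ∀ l : List A, l.Nodup → l.toFinset = S.erase j →
        EmbWord P (j :: l) r := by
      intro j hj l hn ht
      refine hl _ ?_ ?_
      · refine List.nodup_cons.mpr ⟨?_, hn⟩
        intro hmem
        have : j ∈ l.toFinset := by simpa using hmem
        simp [ht] at this
      · rw [List.toFinset_cons, ht, Finset.insert_erase hj]
    have hex : ∀ j ∈ S, ∃ x, r ≤ x ∧ P x j := by
      intro j hj
      obtain ⟨x, h1, h2, -⟩ := hcons j hj (S.erase j).toList (Finset.nodup_toList _) (by simp)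
      exact ⟨x, h1, h2⟩
    let g : A → ℕ := fun j => sInf {x | r ≤ x ∧ P x j}
    have hg : ∀ j ∈ S, r ≤ g j ∧ P (g j) j := fun j hj => Nat.sInf_mem (hex j hj)
    have hne : S.Nonempty := by
      rw [← Finset.card_pos]; omega
    obtain ⟨j, hj, hmax⟩ := S.exists_max_image g hne
    obtain ⟨a, b, hab, hE, ha, hb⟩ := ih (fun a b => R b a) (fun a b h => (hR a b h).symm)
      (S.erase j) (g j + 1) (by rw [Finset.card_erase_of_mem hj]; omega) (by
        intro l hn ht
        obtain ⟨x, h1, h2, h3⟩ := hcons j hj l hn ht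
        have : g j ≤ x := Nat.sInf_le ⟨h1, h2⟩
        exact h3.mono (by omega))
    have ha' := Finset.mem_of_mem_erase ha
    have hb' := Finset.mem_of_mem_erase hb
    refine ⟨b, a, hab, ⟨g b, (hg b hb').1, (hg b hb').2, hE.mono ?_⟩, hb', ha'⟩
    have := hmax b hb'
    omega

lemma full_contains_DS (k n : ℕ) (hk : 1 ≤ k) (M : Fin n → Fin n → Bool)
    (hM : IsFull (k + 1) M) : MatContains M (DS (k + 1)) := by
  obtain ⟨c, hc, hfull⟩ := hM
  obtain ⟨m, rfl⟩ : ∃ m, k = m + 1 := ⟨k - 1, by omega⟩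
  let P : ℕ → Fin (m + 1 + 1) → Prop := fun x j => ∃ h : x < n, M ⟨x, h⟩ (c j) = true
  obtain ⟨b, a, hab, hE, -, -⟩ := exists_alt (P := P) m (fun x y => y < x)
    (fun x y h => (lt_or_gt_of_ne h).symm) Finset.univ 0 (by simp) (by
      intro l hn ht
      have hlen : l.length = m + 1 + 1 := by
        rw [← List.toFinset_card_of_nodup hn, ht]; simp
      let e : Fin (m + 1 + 1) → Fin (m + 1 + 1) := fun i => l[i.val]'(by omega)
      have he : Function.Injective e := by
        intro i j hij
        exact Fin.ext ((hn.getElem_inj_iff).mp hij)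
      let σ := Equiv.ofBijective e (Finite.injective_iff_bijective.mp he)
      obtain ⟨r, hr, hr'⟩ := hfull σ.symm
      refine embWord_of_rows l 0 (fun i => if h : i < m + 1 + 1 then (r ⟨i, h⟩).val else 0)
        ?_ (by simp) ?_
      · intro i j hij hj
        have h1 : i < m + 1 + 1 := by omega
        have h2 : j < m + 1 + 1 := by omega
        simp only [h1, h2, dif_pos]
        exact hr (show (⟨i, h1⟩ : Fin (m + 1 + 1)) < ⟨j, h2⟩ from hij)
      · intro i hi
        have h1 : i < m + 1 + 1 := by omega
        simp only [h1, dif_pos]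
        refine ⟨(r ⟨i, h1⟩).isLt, ?_⟩
        have h3 := hr' (σ ⟨i, h1⟩)
        rw [Equiv.symm_apply_apply] at h3
        exact h3)
  obtain ⟨f, hf, -, hP⟩ := rows_of_embAlt _ _ _ _ hE
  refine ⟨fun i => ⟨f i.val, (hP i.val i.isLt).1⟩, ![c a, c b], ?_, ?_, ?_⟩
  · intro i j hij
    exact hf _ _ hij j.isLt
  · intro i j hij
    have := hc hab
    fin_cases i <;> fin_cases j <;> simp_all
  · intro i j hij
    obtain ⟨h1, h2⟩ := hP i.val i.isLt
    have hij' : (i.val + j.val) % 2 = 1 := by simpa [DS] using hij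
    fin_cases j
    · have h0 : i.val % 2 = 1 := by simpa using hij'
      simpa [h0] using h2
    · have h0 : i.val % 2 = 0 := by
        simp only [] at hij'
        omega
      simpa [h0] using h2

/-- For every `k ≥ 1` and `n ≥ 1`, every `n × n` (0,1)-matrix avoiding
`DS_{k+1}` is not `(k+1)`-full; consequently `p_k(n) ≥ ex_{DS_{k+1}}(n)`. -/
theorem ds_avoiding_not_full :
    ∀ k : ℕ, 1 ≤ k → ∀ n : ℕ, 1 ≤ n →
      (∀ M : Fin n → Fin n → Bool, ¬ MatContains M (DS (k + 1)) → ¬ IsFull (k + 1) M) ∧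
      exMat (DS (k + 1)) n ≤ pFull k n := by
  intro k hk n _
  have key : ∀ M : Fin n → Fin n → Bool, ¬ MatContains M (DS (k + 1)) → ¬ IsFull (k + 1) M :=
    fun M h h' => h (full_contains_DS k n hk M h')
  refine ⟨key, csSup_le_csSup' ?_ ?_⟩
  · refine ⟨Nat.card (Fin n × Fin n), ?_⟩
    rintro x ⟨M, -, rfl⟩
    exact Nat.card_le_card_of_injective _ Subtype.val_injective
  · rintro x ⟨M, h, rfl⟩
    exact ⟨M, key M h, rfl⟩
end
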